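/- arXiv:1802.05873 — 3 statements merged into one kernel-verified Lean document; each statement's English description precedes it below -/
import Mathlib

section
/- Triangle Packing Lemma (Short Child): Let s ≥ 1 and define δ_sh(s) := (1 − 1/(2·√(1+s²) − 1))². Then for every δ with 0 ≤ δ ≤ δ_sh(s), one has δ ≥ ((√(1 + δ·(1+s²)) − 1)/(√(1+s²) − 1))², i.e. δ ≥ B_sh(s,δ). -/
/-!
Put `r = √(1 + s²)` and `d = √δ`. Taking square roots, `B_sh(s, δ) ≤ δ` says that
`√(1 + d²r²) ≤ 1 + d(r - 1)`. Squaring this, the terms `1` and `d²r²` cancel and what remains is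
`d · d(2r - 1) ≤ d · 2(r - 1)`, that is, `d ≤ 2(r - 1)/(2r - 1) = 1 - 1/(2r - 1)`. Every step is
reversible, so `δ_sh(s)` is the exact threshold.
-/

theorem sqrt_one_add_sq_mul_sq_le_iff {d r : ℝ} (hd : 0 ≤ d) (hr : 1 ≤ r) :
    √(1 + d ^ 2 * r ^ 2) ≤ 1 + d * (r - 1) ↔ d * (2 * r - 1) ≤ 2 * (r - 1) := by
  have rhs_nonneg : 0 ≤ 1 + d * (r - 1) := add_nonneg zero_le_one (mul_nonneg hd (sub_nonneg.2 hr))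
  have sq_gap_eq : (1 + d * (r - 1)) ^ 2 - (1 + d ^ 2 * r ^ 2) =
      d * (2 * (r - 1)) - d * (d * (2 * r - 1)) := by ring
  rw [Real.sqrt_le_left rhs_nonneg, ← sub_nonneg, sq_gap_eq, sub_nonneg]
  rcases hd.eq_or_lt with rfl | hd_pos
  · simpa using hr
  · exact mul_le_mul_iff_right₀ hd_pos

theorem le_one_sub_one_div_two_mul_sub_one_iff {d r : ℝ} (hr : 0 < 2 * r - 1) :
    d ≤ 1 - 1 / (2 * r - 1) ↔ d * (2 * r - 1) ≤ 2 * (r - 1) := by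
  have threshold_eq : 1 - 1 / (2 * r - 1) = 2 * (r - 1) / (2 * r - 1) := by
    field_simp
    ring
  rw [threshold_eq, le_div_iff₀ hr]

theorem sqrt_one_add_sq_mul_sq_sub_one_div_le_iff {d r : ℝ} (hd : 0 ≤ d) (hr : 1 < r) :
    (√(1 + d ^ 2 * r ^ 2) - 1) / (r - 1) ≤ d ↔ d ≤ 1 - 1 / (2 * r - 1) := by
  rw [div_le_iff₀ (sub_pos.2 hr), sub_le_iff_le_add', sqrt_one_add_sq_mul_sq_le_iff hd hr.le,
    le_one_sub_one_div_two_mul_sub_one_iff (by linarith)]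

theorem triangle_packing_lemma_short_child_general {s δ : ℝ} (hs : s ≠ 0) (hδ : 0 ≤ δ) :
    δ ≥ ((√(1 + δ * (1 + s ^ 2)) - 1) / (√(1 + s ^ 2) - 1)) ^ 2 ↔
      δ ≤ (1 - 1 / (2 * √(1 + s ^ 2) - 1)) ^ 2 := by
  have hr : 1 < √(1 + s ^ 2) := Real.lt_sqrt_of_sq_lt (by linarith [sq_pos_of_ne_zero hs])
  have hr_sq : √(1 + s ^ 2) ^ 2 = 1 + s ^ 2 := Real.sq_sqrt (by positivity)
  have ratio_nonneg : 0 ≤ (√(1 + δ * (1 + s ^ 2)) - 1) / (√(1 + s ^ 2) - 1) :=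
    div_nonneg (sub_nonneg.2 (Real.one_le_sqrt.2 (le_add_of_nonneg_right (by positivity))))
      (sub_nonneg.2 hr.le)
  have threshold_nonneg : 0 ≤ 1 - 1 / (2 * √(1 + s ^ 2) - 1) :=
    sub_nonneg.2 (div_le_one_of_le₀ (by linarith) (by linarith))
  rw [ge_iff_le, ← Real.le_sqrt ratio_nonneg hδ, ← Real.sqrt_le_left threshold_nonneg,
    ← sqrt_one_add_sq_mul_sq_sub_one_div_le_iff (Real.sqrt_nonneg δ) hr, Real.sq_sqrt hδ, hr_sq]

/-- Triangle Packing Lemma (Short Child): for `s ≥ 1` and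
`0 ≤ δ ≤ δ_sh(s) := (1 − 1/(2√(1+s²) − 1))²`, one has `δ ≥ B_sh(s,δ)`. -/
theorem triangle_packing_lemma_short_child (s δ : ℝ) (hs : 1 ≤ s)
    (hδ0 : 0 ≤ δ) (hδ1 : δ ≤ (1 - 1 / (2 * Real.sqrt (1 + s ^ 2) - 1)) ^ 2) :
    δ ≥ ((Real.sqrt (1 + δ * (1 + s ^ 2)) - 1) / (Real.sqrt (1 + s ^ 2) - 1)) ^ 2 :=
  (triangle_packing_lemma_short_child_general (zero_lt_one.trans_le hs).ne' hδ0).2 hδ1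
end

section
/- For every real s ≥ 1, 3·(1 − 1/(2·√(1+s²) − 1))² ≥ s²/(1+s²); that is, 3·δ_sh(s) ≥ a_lg*/a, where a_lg*/a = s²/(1+s²) is the ideal capacity fraction of the long side. -/
/-!
In terms of `t = √(1 + s²)` the long side has capacity fraction `1 - 1 / t²`. The difference of the
two sides is then `t - 1` times `(2t - 1)³ - 3t`, up to a positive factor, so for `t > 1` the
inequality amounts to `3t ≤ (2t - 1)³`. Since `t ≤ 2t - 1`, this holds as soon as `3 ≤ (2t - 1)²`,
and `t ≥ √2` is enough for that.
-/

section Field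

variable {K : Type*} [Field K]

lemma three_mul_sq_sub_one_sub_one_div_sq {t : K} (ht : t ≠ 0) (ht' : 2 * t - 1 ≠ 0) :
    3 * (1 - 1 / (2 * t - 1)) ^ 2 - (1 - 1 / t ^ 2) =
      (t - 1) * ((2 * t - 1) ^ 3 - 3 * t) / (t * (2 * t - 1)) ^ 2 := by
  field_simp
  ring

variable [LinearOrder K] [IsStrictOrderedRing K]

lemma one_sub_one_div_sq_le_three_mul_sq_iff {t : K} (ht : 1 < t) :
    1 - 1 / t ^ 2 ≤ 3 * (1 - 1 / (2 * t - 1)) ^ 2 ↔ 3 * t ≤ (2 * t - 1) ^ 3 := by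
  have ht₀ : 0 < t := by linarith
  have hd : 0 < 2 * t - 1 := by linarith
  rw [← sub_nonneg, three_mul_sq_sub_one_sub_one_div_sq ht₀.ne' hd.ne',
    le_div_iff₀ (by positivity), zero_mul, mul_nonneg_iff_of_pos_left (sub_pos.2 ht),
    sub_nonneg]

end Field

lemma three_mul_le_two_mul_sub_one_pow_three {R : Type*} [CommRing R] [LinearOrder R]
    [IsStrictOrderedRing R] {t : R} (ht : 1 ≤ t) (hsq : 3 ≤ (2 * t - 1) ^ 2) :
    3 * t ≤ (2 * t - 1) ^ 3 := by
  have hle : t ≤ 2 * t - 1 := by linarith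
  calc
    3 * t ≤ 3 * (2 * t - 1) := by gcongr
    _ ≤ (2 * t - 1) ^ 2 * (2 * t - 1) := by gcongr; linarith
    _ = (2 * t - 1) ^ 3 := (pow_succ _ 2).symm

lemma three_le_two_mul_sub_one_sq {t : ℝ} (ht : √2 ≤ t) : 3 ≤ (2 * t - 1) ^ 2 := by
  have hsqrt : √2 ≤ 3 / 2 := Real.sqrt_le_iff.2 (by norm_num)
  have hone : 1 < √2 := Real.one_lt_sqrt_two
  calc
    3 ≤ 9 - 4 * √2 := by linarith
    _ = (2 * √2 - 1) ^ 2 := by linear_combination -4 * Real.sq_sqrt zero_le_two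
    _ ≤ (2 * t - 1) ^ 2 := by gcongr; linarith

/-- For all `s ≥ 1`, `3·δ_sh(s) ≥ a_lg*/a = s²/(1+s²)`. -/
theorem three_delta_sh_ge (s : ℝ) (hs : 1 ≤ s) :
    3 * (1 - 1 / (2 * Real.sqrt (1 + s ^ 2) - 1)) ^ 2 ≥ s ^ 2 / (1 + s ^ 2) := by
  have hfraction : s ^ 2 / (1 + s ^ 2) = 1 - 1 / √(1 + s ^ 2) ^ 2 := by
    rw [Real.sq_sqrt (by positivity)]
    field_simp
    ring
  have hsqrt : √2 ≤ √(1 + s ^ 2) := Real.sqrt_le_sqrt (by linarith [one_le_pow₀ (n := 2) hs])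
  have hone : 1 < √(1 + s ^ 2) := Real.one_lt_sqrt_two.trans_le hsqrt
  rw [ge_iff_le, hfraction, one_sub_one_div_sq_le_three_mul_sq_iff hone]
  exact three_mul_le_two_mul_sub_one_pow_three hone.le (three_le_two_mul_sub_one_sq hsqrt)
end

section
/- Let s ≥ 1 and set δ_sh := (1 − 1/(2·√(1+s²) − 1))². If 2·δ_sh ≤ s²/(1+s²), then δ_sh > ((√(s² + (s²/(1+s²) − 2·δ_sh)·(1+s²)) − s)/(√(1+s²) − s))²; that is, δ_sh > B_lg(s, s²/(1+s²) − 2·δ_sh). -/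
/-!
Write `w = √(1 + s ^ 2)` and `δ_sh = q ^ 2`. Clearing the square root and the denominator turns the
claim into `2 * s ^ 2 - 2 * q ^ 2 * w ^ 2 < (s + q * (w - s)) ^ 2`. The right-hand side is at least
`s ^ 2 + 2 * q * (s * (w - s))`, and `s * (w - s) = s / (w + s)` increases with `s`, so it is at
least its value `3 / 8` at `s = 3 / 4`, a point chosen because `w = 5 / 4` is rational there. What
is left involves `w` alone and reduces to a cubic.
-/

/-- The paper's `δ_sh(s)`. -/
noncomputable def deltaSh (s : ℝ) : ℝ :=
  (1 - 1 / (2 * √(1 + s ^ 2) - 1)) ^ 2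

/-- The paper's `B_lg(s, δ)`, meant for `0 ≤ s` and `0 ≤ δ`. Its square root `q` is the ratio at
which `s + q * (√(1 + s ^ 2) - s)` reaches `√(s ^ 2 + δ * (1 + s ^ 2))`. -/
noncomputable def boundLg (s δ : ℝ) : ℝ :=
  ((√(s ^ 2 + δ * (1 + s ^ 2)) - s) / (√(1 + s ^ 2) - s)) ^ 2

lemma lt_sqrt_one_add_sq (s : ℝ) : s < √(1 + s ^ 2) :=
  Real.lt_sqrt_of_sq_lt (lt_one_add _)

lemma boundLg_lt_sq_iff {s δ q : ℝ} (hs : 0 ≤ s) (hδ : 0 ≤ δ) (hq : 0 ≤ q) :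
    boundLg s δ < q ^ 2 ↔ s ^ 2 + δ * (1 + s ^ 2) < (s + q * (√(1 + s ^ 2) - s)) ^ 2 := by
  have hden : 0 < √(1 + s ^ 2) - s := sub_pos.2 (lt_sqrt_one_add_sq s)
  have hnum : 0 ≤ √(s ^ 2 + δ * (1 + s ^ 2)) - s :=
    sub_nonneg.2 (Real.le_sqrt_of_sq_le (le_add_of_nonneg_right (by positivity)))
  rw [boundLg, sq_lt_sq₀ (div_nonneg hnum hden.le) hq, div_lt_iff₀ hden, sub_lt_iff_lt_add',
    Real.sqrt_lt (by positivity) (by positivity)]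

lemma three_eighths_le_mul_sqrt_one_add_sq_sub {s : ℝ} (hs : 3 / 4 ≤ s) :
    3 / 8 ≤ s * (√(1 + s ^ 2) - s) := by
  have : 0 ≤ s := by linarith
  have hsq : (s ^ 2 + 3 / 8) ^ 2 ≤ (s * √(1 + s ^ 2)) ^ 2 := by
    rw [mul_pow, Real.sq_sqrt (by positivity)]
    nlinarith
  linarith [(sq_le_sq₀ (by positivity) (by positivity)).1 hsq]

lemma sq_sub_one_lt_of_five_fourths_le {w : ℝ} (hw : 5 / 4 ≤ w) :
    w ^ 2 - 1 < 2 * (1 - 1 / (2 * w - 1)) ^ 2 * w ^ 2 + 3 / 4 * (1 - 1 / (2 * w - 1)) := by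
  have hden : 0 < 2 * w - 1 := by linarith
  have hcubic : 0 < 4 * w ^ 3 - 8 * w ^ 2 + 6 * w - 5 / 2 :=
    calc 0 < (w - 5 / 4) * (4 * (w - 3 / 8) ^ 2 + 27 / 16) + 5 / 16 := by
          have : 0 ≤ w - 5 / 4 := sub_nonneg.2 hw
          positivity
      _ = 4 * w ^ 3 - 8 * w ^ 2 + 6 * w - 5 / 2 := by ring
  have hdiff : 2 * (1 - 1 / (2 * w - 1)) ^ 2 * w ^ 2 + 3 / 4 * (1 - 1 / (2 * w - 1)) -
      (w ^ 2 - 1) = (w - 1) * (4 * w ^ 3 - 8 * w ^ 2 + 6 * w - 5 / 2) / (2 * w - 1) ^ 2 := by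
    field_simp
    ring
  rw [← sub_pos, hdiff]
  exact div_pos (mul_pos (by linarith) hcubic) (by positivity)

theorem case4_inequality_general {s : ℝ} (hs : 3 / 4 ≤ s)
    (h : 2 * deltaSh s ≤ s ^ 2 / (1 + s ^ 2)) :
    boundLg s (s ^ 2 / (1 + s ^ 2) - 2 * deltaSh s) < deltaSh s := by
  have hgap := three_eighths_le_mul_sqrt_one_add_sq_sub hs
  have hw : 5 / 4 ≤ √(1 + s ^ 2) := Real.le_sqrt_of_sq_le (by nlinarith)
  have hw_sq : √(1 + s ^ 2) ^ 2 = 1 + s ^ 2 := Real.sq_sqrt (by positivity)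
  have hq : 0 ≤ 1 - 1 / (2 * √(1 + s ^ 2) - 1) :=
    sub_nonneg.2 ((div_le_one (by linarith)).2 (by linarith))
  have hmain := sq_sub_one_lt_of_five_fourths_le hw
  refine (boundLg_lt_sq_iff (by linarith) (sub_nonneg.2 h) hq).2 ?_
  unfold deltaSh
  set w := √(1 + s ^ 2)
  set q := 1 - 1 / (2 * w - 1)
  calc s ^ 2 + (s ^ 2 / (1 + s ^ 2) - 2 * q ^ 2) * (1 + s ^ 2)
      = s ^ 2 + (w ^ 2 - 1) - 2 * q ^ 2 * w ^ 2 := by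
        rw [hw_sq]
        field_simp
        ring
    _ < s ^ 2 + 2 * q * (3 / 8) := by linarith
    _ ≤ s ^ 2 + 2 * q * (s * (w - s)) := by gcongr
    _ ≤ s ^ 2 + 2 * q * (s * (w - s)) + (q * (w - s)) ^ 2 :=
        le_add_of_nonneg_right (sq_nonneg _)
    _ = (s + q * (w - s)) ^ 2 := by ring

/-- If `2·δ_sh ≤ s²/(1+s²)` then `δ_sh > B_lg(s, s²/(1+s²) − 2·δ_sh)`. -/
theorem case4_inequality (s : ℝ) (hs : 1 ≤ s)
    (δsh : ℝ) (hδsh : δsh = (1 - 1 / (2 * Real.sqrt (1 + s ^ 2) - 1)) ^ 2)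
    (h : 2 * δsh ≤ s ^ 2 / (1 + s ^ 2)) :
    δsh > ((Real.sqrt (s ^ 2 + (s ^ 2 / (1 + s ^ 2) - 2 * δsh) * (1 + s ^ 2)) - s) /
        (Real.sqrt (1 + s ^ 2) - s)) ^ 2 := by
  subst hδsh
  exact case4_inequality_general (by linarith) h
end
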